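/- arXiv:1002.4854 — 4 statements merged into one kernel-verified Lean document; each statement's English description precedes it below -/
import Mathlib

section
/- Let 𝔤 be a finite-dimensional Lie algebra over a field k of characteristic 0 and let (h,e,f) be an sl₂-triple in 𝔤. Then the dimension of ker((ad e)²) equals dim 𝔤(0) + 2·dim 𝔤(1) + dim 𝔤(2), and this number also equals dim 𝔤^e + dim 𝔤^e_nil. -/
open LieAlgebra Module

/-!
An `sl₂`-triple acts on a finite-dimensional `M` with `e` and `f` nilpotent, and pushing `e` past
powers of `f` shows that `f e x = 0` puts `x` in the sum of the weight spaces of weight `≥ 0`;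
symmetrically, `e f x = 0` puts it in weights `≤ 0`. Writing `M(≥ m)` for the sum of the weight
spaces of weight at least `m`, it follows that `ef` is injective, hence bijective, on `M(≥ m)` for
`m ≥ 1`, so `e` maps `M(≥ m)` onto `M(≥ m + 2)` for every `m ≥ -1`. Rank-nullity then gives
`dim (ker e ∩ M(≥ m)) = dim M(m) + dim M(m + 1)`, where `ker e ⊆ M(≥ 0)`. Finally
`dim ker e² = dim ker e + dim (ker e ∩ im e)`, and `ker e ∩ im e = ker e ∩ M(≥ 1)`: on
`ker e ∩ im e` the map `ef` is bijective and agrees with `h`, which kills weight `0`.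
-/

section LinearAlgebra

variable {k V W : Type*} [Field k] [AddCommGroup V] [Module k V] [AddCommGroup W] [Module k W]

lemma finrank_map_add_finrank_ker_inf (φ : V →ₗ[k] W) (p : Submodule k V) [FiniteDimensional k p] :
    finrank k (p.map φ) + finrank k (LinearMap.ker φ ⊓ p : Submodule k V) = finrank k p := by
  rw [← LinearMap.finrank_range_add_finrank_ker (φ.domRestrict p), LinearMap.range_domRestrict,
    LinearMap.ker_domRestrict, inf_comm, ← Submodule.map_comap_subtype,
    Submodule.finrank_map_subtype_eq]

lemma finrank_ker_sq [FiniteDimensional k V] (φ : End k V) :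
    finrank k (LinearMap.ker (φ ^ 2)) = finrank k (LinearMap.ker φ) +
      finrank k (LinearMap.ker φ ⊓ LinearMap.range φ : Submodule k V) := by
  have hker : LinearMap.ker (φ ^ 2) = (LinearMap.ker φ).comap φ := by
    rw [pow_two, Module.End.mul_eq_comp, LinearMap.ker_comp]
  have hle : LinearMap.ker φ ≤ LinearMap.ker (φ ^ 2) := hker ▸ Submodule.comap_mono bot_le
  rw [← finrank_map_add_finrank_ker_inf φ, inf_eq_left.mpr hle, hker, Submodule.map_comap_eq,
    inf_comm, add_comm]

lemma map_eq_self_of_disjoint_ker {φ : End k V} {p : Submodule k V} [FiniteDimensional k p]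
    (hmap : p.map φ ≤ p) (hker : Disjoint p (LinearMap.ker φ)) : p.map φ = p := by
  refine Submodule.eq_of_le_of_finrank_eq hmap ?_
  rw [← finrank_map_add_finrank_ker_inf φ p, hker.symm.eq_bot, finrank_bot, add_zero]

lemma isNilpotent_of_lie_eq_smul {A : Type*} [CharZero k] [Ring A] [Algebra k A]
    [FiniteDimensional k A] {a b : A} {c : k} (hc : c ≠ 0) (hab : ⁅a, b⁆ = c • b) :
    IsNilpotent b := by
  by_contra hb
  have hb_pow (n : ℕ) : b ^ n ≠ 0 := fun hn ↦ hb ⟨n, hn⟩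
  have hlie (n : ℕ) : ⁅a, b ^ n⁆ = (n * c) • b ^ n := by
    induction n with
    | zero => simp [Ring.lie_def]
    | succ n ih =>
      calc ⁅a, b ^ (n + 1)⁆
          = ⁅a, b ^ n⁆ * b + b ^ n * ⁅a, b⁆ := by
            simp only [Ring.lie_def, pow_succ]
            noncomm_ring
        _ = ((n + 1 : ℕ) * c) • b ^ (n + 1) := by
            rw [ih, hab, smul_mul_assoc, mul_smul_comm, ← pow_succ, ← add_smul]
            push_cast
            ring_nf
  have hinj : Function.Injective fun n : ℕ ↦ (n * c : k) := fun m n hmn ↦ by simpa [hc] using hmn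
  have hli := Module.End.eigenvectors_linearIndependent'
    (LinearMap.mulLeft k a - LinearMap.mulRight k a) _ hinj (fun n ↦ b ^ n)
    fun n ↦ ⟨Module.End.mem_eigenspace_iff.mpr (hlie n), hb_pow n⟩
  exact hli.finite.false

end LinearAlgebra

section WeightSum

variable {R M : Type*} [CommRing R] [AddCommGroup M] [Module R M]

/-- The sum of the eigenspaces of `φ` whose eigenvalues are the integers in `s`. For `φ` the action
of the element `h` of an `sl₂`-triple it is the sum of the weight spaces with weights in `s`. -/
def weightSum (φ : End R M) (s : Set ℤ) : Submodule R M :=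
  ⨆ i ∈ s, φ.eigenspace (i : R)

variable {φ : End R M} {s t : Set ℤ}

lemma eigenspace_le_weightSum {i : ℤ} (hi : i ∈ s) : φ.eigenspace (i : R) ≤ weightSum φ s :=
  le_iSup₂_of_le i hi le_rfl

lemma weightSum_mono (hst : s ⊆ t) : weightSum φ s ≤ weightSum φ t :=
  biSup_mono fun _ hi ↦ hst hi

lemma weightSum_singleton (φ : End R M) (i : ℤ) : weightSum φ {i} = φ.eigenspace (i : R) :=
  iSup_singleton

lemma weightSum_union (φ : End R M) (s t : Set ℤ) :
    weightSum φ (s ∪ t) = weightSum φ s ⊔ weightSum φ t :=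
  iSup_union

open scoped Pointwise in
lemma weightSum_neg (φ : End R M) (s : Set ℤ) : weightSum (-φ) s = weightSum φ (-s) := by
  refine (Equiv.neg ℤ).iSup_congr fun i ↦ ?_
  have hi : φ.eigenspace (-i : R) = (-φ).eigenspace (i : R) := by
    ext x
    simp only [Module.End.mem_eigenspace_iff, LinearMap.neg_apply, neg_smul, neg_eq_iff_eq_neg]
  simp [hi]

lemma map_weightSum_le {ψ : End R M} {c : ℤ} (hψ : ⁅φ, ψ⁆ = (c : R) • ψ)
    (hst : ∀ i ∈ s, i + c ∈ t) : (weightSum φ s).map ψ ≤ weightSum φ t := by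
  rw [Submodule.map_le_iff_le_comap]
  refine iSup₂_le fun i hi x hx ↦ eigenspace_le_weightSum (hst i hi) ?_
  rw [Module.End.mem_eigenspace_iff] at hx ⊢
  have hφψ : φ (ψ x) - ψ (φ x) = (c : R) • ψ x := by
    simpa [Ring.lie_def] using LinearMap.congr_fun hψ x
  rw [sub_eq_iff_eq_add.mp hφψ, hx, map_smul, ← add_smul, Int.cast_add, add_comm]

lemma map_weightSum_le_sdiff_zero (φ : End R M) (s : Set ℤ) :
    (weightSum φ s).map φ ≤ weightSum φ (s \ {0}) := by
  rw [Submodule.map_le_iff_le_comap]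
  refine iSup₂_le fun i hi x hx ↦ ?_
  rw [Submodule.mem_comap, Module.End.mem_eigenspace_iff.mp hx]
  obtain rfl | hi₀ := eq_or_ne i 0
  · simp
  · have hi' : i ∈ s \ {0} := ⟨hi, hi₀⟩
    exact Submodule.smul_mem _ _ (eigenspace_le_weightSum hi' hx)

lemma disjoint_weightSum [IsDomain R] [CharZero R] [IsTorsionFree R M] (hst : Disjoint s t) :
    Disjoint (weightSum φ s) (weightSum φ t) :=
  (φ.eigenspaces_iSupIndep.comp (Int.cast_injective (α := R))).disjoint_biSup_biSup hst

end WeightSum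

section WeightSumField

variable {k M : Type*} [Field k] [CharZero k] [AddCommGroup M] [Module k M]

lemma mem_weightSum_insert_of_sub_mem {φ : End k M} {s : Set ℤ} {j : ℤ} (hj : j ∉ s) {x : M}
    (hx : φ x - (j : k) • x ∈ weightSum φ s) : x ∈ weightSum φ (insert j s) := by
  have hsurj : weightSum φ s ≤ (weightSum φ s).map (φ - algebraMap k (End k M) j) := by
    refine iSup₂_le fun i hi y hy ↦ ?_
    have hij : (i - j : k) ≠ 0 := sub_ne_zero.mpr fun hij ↦ hj (Int.cast_injective hij ▸ hi)
    refine ⟨(i - j : k)⁻¹ • y, Submodule.smul_mem _ _ (eigenspace_le_weightSum hi hy), ?_⟩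
    simp only [map_smul, LinearMap.sub_apply, algebraMap_end_apply,
      Module.End.mem_eigenspace_iff.mp hy]
    rw [← sub_smul, inv_smul_smul₀ hij]
  obtain ⟨z, hz, hzx⟩ := hsurj hx
  have hxz : x - z ∈ φ.eigenspace (j : k) := by
    rw [Module.End.mem_eigenspace_iff, map_sub, smul_sub, sub_eq_sub_iff_sub_eq_sub]
    exact hzx.symm
  rw [← sub_add_cancel x z]
  exact add_mem (eigenspace_le_weightSum (s.mem_insert j) hxz)
    (weightSum_mono (s.subset_insert j) hz)

lemma finrank_weightSum_Ici [FiniteDimensional k M] (φ : End k M) (m : ℤ) :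
    finrank k (weightSum φ (Set.Ici m)) =
      finrank k (φ.eigenspace (m : k)) + finrank k (weightSum φ (Set.Ici (m + 1))) := by
  have hm : Set.Ici m = {m} ∪ Set.Ici (m + 1) := by
    ext i
    simp only [Set.mem_Ici, Set.singleton_union, Set.mem_insert_iff]
    lia
  have hdisj : Disjoint (weightSum φ {m}) (weightSum φ (Set.Ici (m + 1))) :=
    disjoint_weightSum (by simp)
  rw [hm, weightSum_union, ← weightSum_singleton, ← Submodule.finrank_sup_add_finrank_inf_eq,
    hdisj.eq_bot, finrank_bot, add_zero]

end WeightSumField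

section Sl2Triple

open LieModule

section CommRing

variable {R L M : Type*} [CommRing R] [LieRing L] [LieAlgebra R L]
  [AddCommGroup M] [Module R M] [LieRingModule L M] [LieModule R L M] {h e f : L}

variable (R M) in
lemma lie_toEnd_h_toEnd_e (t : IsSl2Triple h e f) :
    ⁅toEnd R L M h, toEnd R L M e⁆ = ((2 : ℤ) : R) • toEnd R L M e := by
  ext x
  simp [Ring.lie_def, leibniz_lie h, t.lie_h_e_smul R]

variable (R M) in
lemma lie_toEnd_h_toEnd_f (t : IsSl2Triple h e f) :
    ⁅toEnd R L M h, toEnd R L M f⁆ = ((-2 : ℤ) : R) • toEnd R L M f := by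
  ext x
  simp [Ring.lie_def, leibniz_lie h, t.lie_lie_smul_f R]

lemma lie_e_toEnd_f_pow_succ (t : IsSl2Triple h e f) (n : ℕ) (x : M) :
    ⁅e, (toEnd R L M f ^ (n + 1)) x⁆ = (toEnd R L M f ^ (n + 1)) ⁅e, x⁆ +
      (n + 1 : R) • (toEnd R L M f ^ n) (⁅h, x⁆ - (n : R) • x) := by
  induction n generalizing x with
  | zero => simp [leibniz_lie e, t.lie_e_f, add_comm]
  | succ n ih =>
    have hef : ⁅e, ⁅f, x⁆⁆ = ⁅h, x⁆ + ⁅f, ⁅e, x⁆⁆ := by rw [leibniz_lie, t.lie_e_f]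
    have hhf : ⁅h, ⁅f, x⁆⁆ = ⁅f, ⁅h, x⁆⁆ - (2 : R) • ⁅f, x⁆ := by
      rw [leibniz_lie, t.lie_lie_smul_f R, neg_lie, smul_lie]; abel
    have hpow (m : ℕ) (z : M) : (toEnd R L M f ^ (m + 1)) z = (toEnd R L M f ^ m) ⁅f, z⁆ := by
      simp [pow_succ]
    rw [hpow (n + 1) x, ih, hef, hhf, hpow (n + 1) ⁅e, x⁆]
    simp only [map_add, map_sub, map_smul]
    simp only [hpow n]
    push_cast
    module

lemma lie_f_lie_e_lie_h (t : IsSl2Triple h e f) (x : M) :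
    ⁅f, ⁅e, ⁅h, x⁆⁆⁆ = ⁅h, ⁅f, ⁅e, x⁆⁆⁆ := by
  rw [leibniz_lie h f, leibniz_lie h e, t.lie_h_f_nsmul, t.lie_h_e_nsmul]
  simp

end CommRing

variable {k L M : Type*} [Field k] [CharZero k] [LieRing L] [LieAlgebra k L]
  [AddCommGroup M] [Module k M] [LieRingModule L M] [LieModule k L M] {h e f : L}

-- The powers of `f` kill `x` after applying `h`, `h - 1`, …, `h - (n - 1)` in succession.
lemma mem_weightSum_Ico_of_toEnd_f_pow_eq_zero (t : IsSl2Triple h e f) {n : ℕ} {x : M}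
    (hx : ⁅f, ⁅e, x⁆⁆ = 0) (hn : (toEnd k L M f ^ n) x = 0) :
    x ∈ weightSum (toEnd k L M h) (Set.Ico 0 n) := by
  induction n generalizing x with
  | zero => simp [show x = 0 from hn]
  | succ n ih =>
    have hfe : ⁅f, ⁅e, ⁅h, x⁆ - (n : k) • x⁆⁆ = 0 := by
      simp [lie_f_lie_e_lie_h t, hx]
    have hpow : (toEnd k L M f ^ n) (⁅h, x⁆ - (n : k) • x) = 0 := by
      have hcomm := lie_e_toEnd_f_pow_succ (R := k) t n x
      rw [hn, lie_zero, pow_succ, Module.End.mul_apply, toEnd_apply_apply, hx, map_zero,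
        zero_add] at hcomm
      exact (smul_eq_zero.mp hcomm.symm).resolve_left n.cast_add_one_ne_zero
    have hmem : x ∈ weightSum (toEnd k L M h) (insert (n : ℤ) (Set.Ico 0 n)) :=
      mem_weightSum_insert_of_sub_mem (by simp) (by simpa using ih hfe hpow)
    refine weightSum_mono (fun i hi ↦ ?_) hmem
    simp only [Set.mem_insert_iff, Set.mem_Ico] at hi ⊢
    lia

variable [FiniteDimensional k M]

variable (k M)

lemma ker_f_mul_e_le_weightSum_Ici (t : IsSl2Triple h e f) :
    LinearMap.ker (toEnd k L M f * toEnd k L M e) ≤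
      weightSum (toEnd k L M h) (Set.Ici 0) := by
  intro x hx
  obtain ⟨n, hn⟩ := isNilpotent_of_lie_eq_smul (by simp) (lie_toEnd_h_toEnd_f k M t)
  exact weightSum_mono Set.Ico_subset_Ici_self
    (mem_weightSum_Ico_of_toEnd_f_pow_eq_zero t (n := n) hx (by simp [hn]))

lemma ker_e_mul_f_le_weightSum_Iic (t : IsSl2Triple h e f) :
    LinearMap.ker (toEnd k L M e * toEnd k L M f) ≤
      weightSum (toEnd k L M h) (Set.Iic 0) := by
  simpa [weightSum_neg] using ker_f_mul_e_le_weightSum_Ici k M t.symm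

lemma ker_e_le_weightSum_Ici (t : IsSl2Triple h e f) :
    LinearMap.ker (toEnd k L M e) ≤ weightSum (toEnd k L M h) (Set.Ici 0) :=
  (LinearMap.ker_le_ker_comp _ _).trans (ker_f_mul_e_le_weightSum_Ici k M t)

lemma ker_f_mul_e (t : IsSl2Triple h e f) :
    LinearMap.ker (toEnd k L M f * toEnd k L M e) = LinearMap.ker (toEnd k L M e) := by
  refine le_antisymm (fun x hx ↦ ?_) (LinearMap.ker_le_ker_comp _ _)
  have hfe : ⁅f, ⁅e, x⁆⁆ = 0 := hx
  have hge : ⁅e, x⁆ ∈ weightSum (toEnd k L M h) (Set.Ici 2) :=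
    map_weightSum_le (lie_toEnd_h_toEnd_e k M t) (by simp)
      (Submodule.mem_map_of_mem (ker_f_mul_e_le_weightSum_Ici k M t hx))
  have hle : ⁅e, x⁆ ∈ weightSum (toEnd k L M h) (Set.Iic 0) :=
    ker_e_mul_f_le_weightSum_Iic k M t (by simp [hfe])
  exact Submodule.disjoint_def.mp (disjoint_weightSum (by simp)) _ hge hle

lemma disjoint_range_e_ker_f (t : IsSl2Triple h e f) :
    Disjoint (LinearMap.range (toEnd k L M e)) (LinearMap.ker (toEnd k L M f)) := by
  rw [Submodule.disjoint_def]
  rintro - ⟨x, rfl⟩ hx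
  exact (ker_f_mul_e k M t).le hx

lemma map_e_weightSum_Ici (t : IsSl2Triple h e f) {m : ℤ} (hm : -1 ≤ m) :
    (weightSum (toEnd k L M h) (Set.Ici m)).map (toEnd k L M e) =
      weightSum (toEnd k L M h) (Set.Ici (m + 2)) := by
  have he : (weightSum (toEnd k L M h) (Set.Ici m)).map (toEnd k L M e) ≤
      weightSum (toEnd k L M h) (Set.Ici (m + 2)) :=
    map_weightSum_le (lie_toEnd_h_toEnd_e k M t) (by simp)
  have hf : (weightSum (toEnd k L M h) (Set.Ici (m + 2))).map (toEnd k L M f) ≤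
      weightSum (toEnd k L M h) (Set.Ici m) :=
    map_weightSum_le (lie_toEnd_h_toEnd_f k M t) fun i hi ↦ by
      simp only [Set.mem_Ici] at hi ⊢
      lia
  have hdisj : Disjoint (weightSum (toEnd k L M h) (Set.Ici (m + 2)))
      (LinearMap.ker (toEnd k L M e * toEnd k L M f)) :=
    (disjoint_weightSum (Set.Ici_disjoint_Iic.mpr (by lia))).mono_right
      (ker_e_mul_f_le_weightSum_Iic k M t)
  have hef : (weightSum (toEnd k L M h) (Set.Ici (m + 2))).map (toEnd k L M e * toEnd k L M f) =
      weightSum (toEnd k L M h) (Set.Ici (m + 2)) := by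
    refine map_eq_self_of_disjoint_ker ?_ hdisj
    rw [Module.End.mul_eq_comp, Submodule.map_comp]
    exact (Submodule.map_mono hf).trans he
  refine le_antisymm he ?_
  rw [← hef, Module.End.mul_eq_comp, Submodule.map_comp]
  exact Submodule.map_mono hf

lemma finrank_ker_e_inf_weightSum_Ici (t : IsSl2Triple h e f) {m : ℤ} (hm : -1 ≤ m) :
    finrank k (LinearMap.ker (toEnd k L M e) ⊓ weightSum (toEnd k L M h) (Set.Ici m) :
        Submodule k M) =
      finrank k ((toEnd k L M h).eigenspace (m : k)) +
        finrank k ((toEnd k L M h).eigenspace ((m + 1 : ℤ) : k)) := by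
  have hrank := finrank_map_add_finrank_ker_inf (toEnd k L M e)
    (weightSum (toEnd k L M h) (Set.Ici m))
  rw [map_e_weightSum_Ici k M t hm, finrank_weightSum_Ici _ m, finrank_weightSum_Ici _ (m + 1),
    add_assoc m 1 1, one_add_one_eq_two] at hrank
  lia

lemma finrank_ker_e (t : IsSl2Triple h e f) :
    finrank k (LinearMap.ker (toEnd k L M e)) =
      finrank k ((toEnd k L M h).eigenspace ((0 : ℤ) : k)) +
        finrank k ((toEnd k L M h).eigenspace ((1 : ℤ) : k)) := by
  rw [← zero_add (1 : ℤ), ← finrank_ker_e_inf_weightSum_Ici k M t (by simp),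
    inf_eq_left.mpr (ker_e_le_weightSum_Ici k M t)]

lemma ker_e_inf_range_e_le_weightSum_Ici (t : IsSl2Triple h e f) :
    LinearMap.ker (toEnd k L M e) ⊓ LinearMap.range (toEnd k L M e) ≤
      weightSum (toEnd k L M h) (Set.Ici 1) := by
  set N := LinearMap.ker (toEnd k L M e) ⊓ LinearMap.range (toEnd k L M e)
  have hef {x : M} (hx : x ∈ N) : ⁅e, ⁅f, x⁆⁆ = ⁅h, x⁆ := by
    rw [leibniz_lie, t.lie_e_f, show ⁅e, x⁆ = 0 from hx.1, lie_zero, add_zero]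
  have hmap : N.map (toEnd k L M e * toEnd k L M f) ≤ N := by
    rintro - ⟨x, hx, rfl⟩
    refine ⟨?_, ⁅f, x⁆, rfl⟩
    change ⁅e, ⁅e, ⁅f, x⁆⁆⁆ = 0
    rw [hef hx, leibniz_lie, show ⁅e, x⁆ = 0 from hx.1, lie_zero, add_zero, ← lie_skew,
      t.lie_h_e_nsmul, neg_lie, nsmul_lie, show ⁅e, x⁆ = 0 from hx.1, smul_zero, neg_zero]
  have hdisj : Disjoint N (LinearMap.ker (toEnd k L M e * toEnd k L M f)) := by
    rw [ker_f_mul_e k M t.symm]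
    exact (disjoint_range_e_ker_f k M t).mono_left inf_le_right
  rw [← map_eq_self_of_disjoint_ker hmap hdisj]
  rintro - ⟨x, hx, rfl⟩
  have hhx : ⁅h, x⁆ ∈ weightSum (toEnd k L M h) (Set.Ici 0 \ {0}) :=
    map_weightSum_le_sdiff_zero _ _
      (Submodule.mem_map_of_mem (ker_e_le_weightSum_Ici k M t hx.1))
  rw [Module.End.mul_apply, toEnd_apply_apply, toEnd_apply_apply, hef hx]
  refine weightSum_mono (fun i hi ↦ ?_) hhx
  simp only [Set.mem_sdiff, Set.mem_Ici, Set.mem_singleton_iff] at hi ⊢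
  lia

lemma ker_e_inf_range_e (t : IsSl2Triple h e f) :
    LinearMap.ker (toEnd k L M e) ⊓ LinearMap.range (toEnd k L M e) =
      LinearMap.ker (toEnd k L M e) ⊓ weightSum (toEnd k L M h) (Set.Ici 1) := by
  refine le_antisymm (le_inf inf_le_left (ker_e_inf_range_e_le_weightSum_Ici k M t))
    (inf_le_inf_left _ ?_)
  rw [show (1 : ℤ) = -1 + 2 by norm_num, ← map_e_weightSum_Ici k M t le_rfl]
  exact LinearMap.map_le_range

theorem stmt_0_general (t : IsSl2Triple h e f) :
    finrank k (LinearMap.ker (toEnd k L M e ^ 2)) =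
      finrank k ((toEnd k L M h).eigenspace ((0 : ℤ) : k)) +
        2 * finrank k ((toEnd k L M h).eigenspace ((1 : ℤ) : k)) +
        finrank k ((toEnd k L M h).eigenspace ((2 : ℤ) : k)) ∧
    finrank k (LinearMap.ker (toEnd k L M e ^ 2)) =
      finrank k (LinearMap.ker (toEnd k L M e)) +
        finrank k (LinearMap.ker (toEnd k L M e) ⊓
          ⨆ i ∈ Set.Ici (1 : ℤ), (toEnd k L M h).eigenspace (i : k) : Submodule k M) := by
  have hsq : finrank k (LinearMap.ker (toEnd k L M e ^ 2)) =
      finrank k (LinearMap.ker (toEnd k L M e)) + finrank k (LinearMap.ker (toEnd k L M e) ⊓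
        weightSum (toEnd k L M h) (Set.Ici 1) : Submodule k M) := by
    rw [finrank_ker_sq, ker_e_inf_range_e k M t]
  refine ⟨?_, hsq⟩
  rw [hsq, finrank_ker_e k M t, finrank_ker_e_inf_weightSum_Ici k M t (by simp),
    one_add_one_eq_two]
  ring

end Sl2Triple

/-- For an sl₂-triple `(h,e,f)` in a finite-dimensional Lie algebra over a char-0 field,
`dim ker((ad e)²) = dim 𝔤(0) + 2·dim 𝔤(1) + dim 𝔤(2) = dim 𝔤^e + dim 𝔤^e_nil`. -/
theorem stmt_0 {k : Type*} [Field k] [CharZero k]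
    {L : Type*} [LieRing L] [LieAlgebra k L] [FiniteDimensional k L]
    {h e f : L} (ht : IsSl2Triple h e f) :
    Module.finrank k (LinearMap.ker ((ad k L e) ^ 2)) =
      Module.finrank k ((ad k L h).eigenspace ((0 : ℤ) : k)) +
        2 * Module.finrank k ((ad k L h).eigenspace ((1 : ℤ) : k)) +
        Module.finrank k ((ad k L h).eigenspace ((2 : ℤ) : k)) ∧
    Module.finrank k (LinearMap.ker ((ad k L e) ^ 2)) =
      Module.finrank k (LinearMap.ker (ad k L e)) +
        Module.finrank k ((LinearMap.ker (ad k L e) ⊓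
          ⨆ i ∈ Set.Ici (1 : ℤ), (ad k L h).eigenspace ((i : ℤ) : k) : Submodule k L)) :=
  stmt_0_general k L ht
end

section
/- Let 𝔤 be a finite-dimensional Lie algebra over a field k of characteristic 0 and let (h,e,f) and (h/2, e', f') both be sl₂-triples in 𝔤. Then for every integer i ≥ 0: dim(𝔤^e ∩ 𝔤(2i)) + dim(𝔤^e ∩ 𝔤(2i+2)) = dim(𝔤^{e'} ∩ 𝔤(2i)). (Here 𝔤^{e'} ∩ 𝔤(2i) is the degree-i component of the centralizer of e' with respect to its characteristic h/2.) -/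
open LieAlgebra Module

/-!
Let `M(μ)` be the `μ`-eigenspace of `h` in a finite-dimensional representation `M`. If `μ + 2` is
not a nonpositive integer, then `e : M(μ) → M(μ + 2)` is surjective: if `v ∈ M(μ + 2)` satisfies
`eⁿ⁺¹ v = 0`, then `eⁿ` kills `e f v - (n + 1) (μ + 2 + n) v`, so by induction on `n` a nonzero
multiple of `v` lies in the image of `e`. By rank–nullity,
`dim (Mᵉ ∩ M(μ)) = dim M(μ) - dim M(μ + 2)`. Since the `i`-eigenspace of `h / 2` is `M(2i)`, both
sides of the identity are equal to `dim M(2i) - dim M(2i + 4)`.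
-/

lemma finrank_ker_inf_add_finrank_map {K V W : Type*} [DivisionRing K] [AddCommGroup V]
    [Module K V] [AddCommGroup W] [Module K W] (T : V →ₗ[K] W) (p : Submodule K V)
    [FiniteDimensional K p] :
    finrank K (LinearMap.ker T ⊓ p : Submodule K V) + finrank K (p.map T) = finrank K p := by
  rw [← (T.domRestrict p).finrank_range_add_finrank_ker, LinearMap.range_domRestrict,
    LinearMap.ker_domRestrict, add_comm, inf_comm, ← Submodule.map_comap_subtype,
    Submodule.finrank_map_subtype_eq]

lemma eigenspace_inv_smul {K V : Type*} [Field K] [AddCommGroup V] [Module K V] (T : End K V)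
    {c : K} (hc : c ≠ 0) (μ : K) : (c⁻¹ • T).eigenspace μ = T.eigenspace (c * μ) := by
  ext v
  simp only [End.mem_eigenspace_iff, LinearMap.smul_apply, inv_smul_eq_iff₀ hc, mul_smul]

namespace Sl2Triple

open LieModule

section CommRing

variable {R L M : Type*} [CommRing R] [LieRing L] [LieAlgebra R L]
  [AddCommGroup M] [Module R M] [LieRingModule L M] [LieModule R L M]
  {h e f : L} {μ : R} {v : M}

lemma lie_e_mem_eigenspace (t : IsSl2Triple h e f) (hv : v ∈ (toEnd R L M h).eigenspace μ) :
    ⁅e, v⁆ ∈ (toEnd R L M h).eigenspace (μ + 2) := by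
  rw [End.mem_eigenspace_iff, toEnd_apply_apply] at hv ⊢
  rw [leibniz_lie, t.lie_h_e_smul R, hv, smul_lie, lie_smul, ← add_smul, add_comm]

lemma lie_f_mem_eigenspace (t : IsSl2Triple h e f) (hv : v ∈ (toEnd R L M h).eigenspace μ) :
    ⁅f, v⁆ ∈ (toEnd R L M h).eigenspace (μ - 2) := by
  rw [End.mem_eigenspace_iff, toEnd_apply_apply] at hv ⊢
  rw [leibniz_lie, t.lie_lie_smul_f R, hv, neg_lie, smul_lie, lie_smul, sub_smul]
  abel

lemma toEnd_e_pow_succ_lie_f (t : IsSl2Triple h e f)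
    (hv : v ∈ (toEnd R L M h).eigenspace μ) (n : ℕ) :
    (toEnd R L M e ^ (n + 1)) ⁅f, v⁆ =
      ⁅f, (toEnd R L M e ^ (n + 1)) v⁆ + ((n + 1) * (μ + n)) • (toEnd R L M e ^ n) v := by
  rw [End.mem_eigenspace_iff, toEnd_apply_apply] at hv
  induction n with
  | zero => simp [leibniz_lie e, t.lie_e_f, hv, add_comm]
  | succ n ih =>
    calc (toEnd R L M e ^ (n + 1 + 1)) ⁅f, v⁆
      _ = ⁅e, ⁅f, (toEnd R L M e ^ (n + 1)) v⁆⁆ +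
          ((n + 1) * (μ + n)) • (toEnd R L M e ^ (n + 1)) v := by
        rw [← IsSl2Triple.lie_e_pow_toEnd_e, ih, lie_add, lie_smul,
          IsSl2Triple.lie_e_pow_toEnd_e n]
      _ = ⁅f, (toEnd R L M e ^ (n + 1 + 1)) v⁆ +
          ((μ + 2 * (n + 1 : ℕ)) • (toEnd R L M e ^ (n + 1)) v +
            ((n + 1) * (μ + n)) • (toEnd R L M e ^ (n + 1)) v) := by
        rw [leibniz_lie e, t.lie_e_f, t.lie_h_pow_toEnd_e hv, IsSl2Triple.lie_e_pow_toEnd_e,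
          add_comm (_ • _) ⁅f, _⁆, add_assoc]
      _ = ⁅f, (toEnd R L M e ^ (n + 1 + 1)) v⁆ +
          (((n + 1 : ℕ) + 1) * (μ + (n + 1 : ℕ))) • (toEnd R L M e ^ (n + 1)) v := by
        rw [← add_smul]
        push_cast
        ring_nf

lemma exists_toEnd_e_pow_eq_zero [IsDomain R] [CharZero R] [IsTorsionFree R M] [IsNoetherian R M]
    (t : IsSl2Triple h e f) (hv : v ∈ (toEnd R L M h).eigenspace μ) :
    ∃ n : ℕ, (toEnd R L M e ^ n) v = 0 := by
  by_contra! pow_ne_zero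
  have weight_injective : Function.Injective fun n : ℕ ↦ μ + 2 * (n : R) :=
    fun a b hab ↦ by simpa using hab
  have linearIndependent := (toEnd R L M h).eigenvectors_linearIndependent' _ weight_injective
    (fun n ↦ (toEnd R L M e ^ n) v) fun n ↦
      ⟨End.mem_eigenspace_iff.mpr (t.lie_h_pow_toEnd_e (End.mem_eigenspace_iff.mp hv) n),
        pow_ne_zero n⟩
  exact not_finite_iff_infinite.mpr (inferInstanceAs (Infinite ℕ)) linearIndependent.finite

end CommRing

section Field

variable {k L M : Type*} [Field k] [CharZero k] [LieRing L] [LieAlgebra k L]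
  [AddCommGroup M] [Module k M] [LieRingModule L M] [LieModule k L M]
  {h e f : L} {μ : k}

lemma mem_map_toEnd_e_eigenspace_of_pow_eq_zero (t : IsSl2Triple h e f)
    (hμ : ∀ n : ℕ, μ + 2 + n ≠ 0) {n : ℕ} {v : M}
    (hv : v ∈ (toEnd k L M h).eigenspace (μ + 2)) (hn : (toEnd k L M e ^ n) v = 0) :
    v ∈ ((toEnd k L M h).eigenspace μ).map (toEnd k L M e) := by
  induction n generalizing v with
  | zero =>
    obtain rfl : v = 0 := by simpa using hn
    exact zero_mem _
  | succ n ih =>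
    let c : k := (n + 1) * (μ + 2 + n)
    have hc : c ≠ 0 := mul_ne_zero n.cast_add_one_ne_zero (hμ n)
    have hfv : ⁅f, v⁆ ∈ (toEnd k L M h).eigenspace μ := by
      simpa using lie_f_mem_eigenspace t hv
    have pow_apply_eq_zero : (toEnd k L M e ^ n) (⁅e, ⁅f, v⁆⁆ - c • v) = 0 := by
      have commutation := toEnd_e_pow_succ_lie_f t hv n
      rw [hn, lie_zero, zero_add, pow_succ, End.mul_apply, toEnd_apply_apply] at commutation
      rw [map_sub, map_smul, commutation, sub_self]
    have sub_mem_map := ih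
      (sub_mem (lie_e_mem_eigenspace t hfv) (Submodule.smul_mem _ c hv)) pow_apply_eq_zero
    have smul_mem_map := sub_mem (Submodule.mem_map_of_mem hfv) sub_mem_map
    rw [toEnd_apply_apply, sub_sub_cancel] at smul_mem_map
    exact (Submodule.smul_mem_iff _ hc).mp smul_mem_map

variable [FiniteDimensional k M]

lemma map_toEnd_e_eigenspace (t : IsSl2Triple h e f) (hμ : ∀ n : ℕ, μ + 2 + n ≠ 0) :
    ((toEnd k L M h).eigenspace μ).map (toEnd k L M e) = (toEnd k L M h).eigenspace (μ + 2) := by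
  refine le_antisymm (Submodule.map_le_iff_le_comap.mpr fun _ ↦ lie_e_mem_eigenspace t) ?_
  intro v hv
  obtain ⟨n, hn⟩ := exists_toEnd_e_pow_eq_zero t hv
  exact mem_map_toEnd_e_eigenspace_of_pow_eq_zero t hμ hv hn

lemma finrank_ker_toEnd_e_inf_eigenspace_add (t : IsSl2Triple h e f)
    (hμ : ∀ n : ℕ, μ + 2 + n ≠ 0) :
    finrank k (LinearMap.ker (toEnd k L M e) ⊓ (toEnd k L M h).eigenspace μ : Submodule k M) +
        finrank k ((toEnd k L M h).eigenspace (μ + 2)) =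
      finrank k ((toEnd k L M h).eigenspace μ) := by
  rw [← map_toEnd_e_eigenspace t hμ, finrank_ker_inf_add_finrank_map]

end Field

end Sl2Triple

open LieModule in
theorem stmt_3_general {k L M : Type*} [Field k] [CharZero k] [LieRing L] [LieAlgebra k L]
    [AddCommGroup M] [Module k M] [LieRingModule L M] [LieModule k L M] [FiniteDimensional k M]
    {h e f e' f' : L} (t : IsSl2Triple h e f) (t' : IsSl2Triple ((2⁻¹ : k) • h) e' f')
    {μ : k} (hμ : ∀ n : ℕ, 2 * μ + 2 + n ≠ 0) :
    finrank k (LinearMap.ker (toEnd k L M e) ⊓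
          (toEnd k L M h).eigenspace (2 * μ) : Submodule k M) +
        finrank k (LinearMap.ker (toEnd k L M e) ⊓
          (toEnd k L M h).eigenspace (2 * μ + 2) : Submodule k M) =
      finrank k (LinearMap.ker (toEnd k L M e') ⊓
          (toEnd k L M h).eigenspace (2 * μ) : Submodule k M) := by
  have two_mul_add_four_ne (n : ℕ) : 2 * μ + 2 + 2 + n ≠ 0 := by
    simpa [add_assoc] using hμ (2 + n)
  have half_weight_ne (n : ℕ) : μ + 2 + n ≠ 0 := fun hn ↦
    hμ (2 * n + 2) (by push_cast; linear_combination 2 * hn)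
  have eigenspace_half (ν : k) : (toEnd k L M ((2⁻¹ : k) • h)).eigenspace ν =
      (toEnd k L M h).eigenspace (2 * ν) := by
    rw [map_smul, eigenspace_inv_smul _ two_ne_zero]
  have rank_e := Sl2Triple.finrank_ker_toEnd_e_inf_eigenspace_add (M := M) t hμ
  have rank_e_succ :=
    Sl2Triple.finrank_ker_toEnd_e_inf_eigenspace_add (M := M) t two_mul_add_four_ne
  have rank_e' := Sl2Triple.finrank_ker_toEnd_e_inf_eigenspace_add (M := M) t' half_weight_ne
  rw [eigenspace_half, eigenspace_half, show 2 * (μ + 2) = 2 * μ + 2 + 2 by ring] at rank_e'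
  omega

/-- If `(h,e,f)` and `(h/2,e',f')` are both sl₂-triples in a finite-dimensional char-0
Lie algebra, then for all `i ≥ 0`:
`dim(𝔤^e ∩ 𝔤(2i)) + dim(𝔤^e ∩ 𝔤(2i+2)) = dim(𝔤^{e'} ∩ 𝔤(2i))`. -/
theorem stmt_3 {k : Type*} [Field k] [CharZero k]
    {L : Type*} [LieRing L] [LieAlgebra k L] [FiniteDimensional k L]
    {h e f e' f' : L} (ht : IsSl2Triple h e f)
    (ht' : IsSl2Triple ((2⁻¹ : k) • h) e' f') :
    ∀ i : ℤ, 0 ≤ i →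
      Module.finrank k ((LinearMap.ker (ad k L e) ⊓
          (ad k L h).eigenspace (((2 * i : ℤ) : k)) : Submodule k L)) +
        Module.finrank k ((LinearMap.ker (ad k L e) ⊓
          (ad k L h).eigenspace (((2 * i + 2 : ℤ) : k)) : Submodule k L)) =
      Module.finrank k ((LinearMap.ker (ad k L e') ⊓
          (ad k L h).eigenspace (((2 * i : ℤ) : k)) : Submodule k L)) := by
  intro i hi
  rw [Int.cast_add, Int.cast_mul, Int.cast_ofNat]
  exact stmt_3_general ht ht' fun n ↦ by exact_mod_cast (by omega : 2 * i + 2 + (n : ℤ) ≠ 0)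
end

section
/- Let 𝔤 be a finite-dimensional semisimple Lie algebra over an algebraically closed field of characteristic 0 and let (h,e,f) and (h/2, e', f') both be sl₂-triples in 𝔤. Then for every integer j ≥ 1, the number dim(𝔤^e ∩ 𝔤(4j−2)) + dim(𝔤^e ∩ 𝔤(4j)) is even. -/
open LieAlgebra Module

/-!
Let `M` carry a nondegenerate symmetric invariant form `Φ`, and let `M(m)` be the `m`-eigenspace
of `h`. For `m ≥ -1` the map `e : M(m) → M(m + 2)` is onto, so
`dim (ker e ∩ M(m)) = dim M(m) - dim M(m + 2)`, and the sum in question telescopes to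
`dim M(4j - 2) - dim M(4j + 2)`. These two spaces are the eigenspaces of `h / 2` for the odd
eigenvalues `2j - 1` and `2j + 1`. For any sl₂-triple and `m ≥ 0`, the map `f ^ m : M(m) → M(-m)`
is injective, and `Φ` pairs `M(m)` with `M(-m)` perfectly because `h` has no nontrivial Jordan
blocks at integer eigenvalues. So `(x, y) ↦ Φ x (f ^ m y)` is nondegenerate on `M(m)`, and for odd
`m` it is skew-symmetric, which forces `dim M(m)` to be even.
-/

open LieModule

section LinearAlgebra

variable {K V : Type*} [Field K]

theorem isNilpotent_of_commutator_eq_smul {A : Type*} [CharZero K] [Ring A] [Algebra K A]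
    [FiniteDimensional K A] {a b : A} {c : K} (hc : c ≠ 0) (hab : a * b - b * a = c • b) :
    IsNilpotent b := by
  have commutator_pow (n : ℕ) : a * b ^ n - b ^ n * a = (n * c) • b ^ n := by
    induction n with
    | zero => simp
    | succ n ih =>
      calc a * b ^ (n + 1) - b ^ (n + 1) * a
          = (a * b ^ n - b ^ n * a) * b + b ^ n * (a * b - b * a) := by
            rw [pow_succ]; noncomm_ring
        _ = ((n + 1 : ℕ) * c) • b ^ (n + 1) := by
            rw [ih, hab, smul_mul_assoc, mul_smul_comm, ← pow_succ, Nat.cast_succ]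
            module
  by_contra hb
  let D : End K A := LinearMap.mulLeft K a - LinearMap.mulRight K a
  have hasEigenvalue (n : ℕ) : D.HasEigenvalue (n * c) :=
    End.hasEigenvalue_of_hasEigenvector
      ⟨End.mem_eigenspace_iff.2 (commutator_pow n), fun h ↦ hb ⟨n, h⟩⟩
  exact Set.infinite_of_injective_forall_mem
    (fun m n hmn ↦ Nat.cast_injective (mul_right_cancel₀ hc hmn)) hasEigenvalue
    (End.finite_hasEigenvalue _)

variable [AddCommGroup V] [Module K V]

theorem eigenspace_smul_mul (φ : End K V) (μ : K) {c : K} (hc : c ≠ 0) :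
    (c • φ).eigenspace (c * μ) = φ.eigenspace μ := by
  ext x
  simp only [End.mem_eigenspace_iff, LinearMap.smul_apply, mul_smul, smul_right_inj hc]

variable [FiniteDimensional K V]

theorem finrank_inf_ker_add_finrank_map {V' : Type*} [AddCommGroup V'] [Module K V']
    (φ : V →ₗ[K] V') (W : Submodule K V) :
    finrank K ↥(LinearMap.ker φ ⊓ W) + finrank K (W.map φ) = finrank K W := by
  rw [← (φ.domRestrict W).finrank_range_add_finrank_ker, LinearMap.range_domRestrict,
    LinearMap.ker_domRestrict, ← Submodule.finrank_map_subtype_eq, Submodule.map_comap_subtype,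
    inf_comm, add_comm]

variable {B : LinearMap.BilinForm K V}

theorem even_finrank_of_nondegenerate_of_skew (h2 : (2 : K) ≠ 0) (hB : B.Nondegenerate)
    (hskew : ∀ x y, B x y = -B y x) : Even (finrank K V) := by
  let A := LinearMap.BilinForm.toMatrix (finBasis K V) B
  have det_ne_zero : A.det ≠ 0 := by
    rwa [← Matrix.nondegenerate_iff_det_ne_zero, LinearMap.BilinForm.nondegenerate_toMatrix_iff]
  have transpose_eq_neg : A.transpose = -A := by
    ext i j
    simp [A, LinearMap.BilinForm.toMatrix_apply, hskew (finBasis K V j) (finBasis K V i)]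
  by_contra hodd
  have det_eq_neg : A.det = -A.det := by
    simpa [Matrix.det_neg, (Nat.not_even_iff_odd.1 hodd).neg_one_pow] using
      congrArg Matrix.det transpose_eq_neg
  exact mul_ne_zero h2 det_ne_zero (by linear_combination det_eq_neg)

theorem orthogonal_ker_eq_range_of_isAdjointPair (hB : B.Nondegenerate) (hrefl : B.IsRefl)
    {S T : End K V} (hST : B.IsAdjointPair B S T) :
    B.orthogonal (LinearMap.ker S) = LinearMap.range T := by
  have orthogonal_range : B.orthogonal (LinearMap.range T) = LinearMap.ker S := by
    ext x
    have apply_comm (y : V) : B (T y) x = 0 ↔ B (S x) y = 0 := by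
      rw [hST x y, hrefl.eq_iff]
    simp only [LinearMap.BilinForm.mem_orthogonal_iff, LinearMap.mem_range,
      forall_exists_index, forall_apply_eq_imp_iff, LinearMap.mem_ker, apply_comm]
    exact ⟨hB.1 (S x), fun hx y ↦ by rw [hx, map_zero, LinearMap.zero_apply]⟩
  rw [← orthogonal_range, B.orthogonal_orthogonal hB hrefl]

end LinearAlgebra

namespace Sl2Rep

variable {K L M : Type*} [LieRing L] [AddCommGroup M] [LieRingModule L M] {h e f : L}

section Commutators

variable {R : Type*} [CommRing R] [LieAlgebra R L] [Module R M] [LieModule R L M]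

theorem lieInvariant_pow_toEnd {Φ : LinearMap.BilinForm R M} (hinv : Φ.lieInvariant L) (u : L)
    (n : ℕ) (x y : M) :
    Φ ((toEnd R L M u ^ n) x) y = (-1) ^ n * Φ x ((toEnd R L M u ^ n) y) := by
  induction n generalizing y with
  | zero => simp
  | succ n ih =>
    rw [pow_succ', End.mul_apply, toEnd_apply_apply, hinv, ih, ← toEnd_apply_apply R L M u y,
      ← End.mul_apply, ← pow_succ, ← pow_succ']
    ring

variable (R)

theorem lie_h_lie_e (t : IsSl2Triple h e f) (x : M) :
    ⁅h, ⁅e, x⁆⁆ = ⁅e, ⁅h, x⁆ + (2 : R) • x⁆ := by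
  rw [leibniz_lie, t.lie_h_e_smul R, smul_lie, lie_add, lie_smul, add_comm]

theorem lie_h_lie_f (t : IsSl2Triple h e f) (x : M) :
    ⁅h, ⁅f, x⁆⁆ = ⁅f, ⁅h, x⁆ - (2 : R) • x⁆ := by
  rw [leibniz_lie, t.lie_lie_smul_f R, neg_lie, smul_lie, lie_sub, lie_smul, neg_add_eq_sub]

theorem lie_h_pow_toEnd_f (t : IsSl2Triple h e f) (x : M) (n : ℕ) :
    ⁅h, (toEnd R L M f ^ n) x⁆ = (toEnd R L M f ^ n) (⁅h, x⁆ - (2 * n : R) • x) := by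
  induction n with
  | zero => simp
  | succ n ih =>
    simp only [pow_succ', End.mul_apply, toEnd_apply_apply]
    rw [lie_h_lie_f R t, ih, ← map_smul, ← map_sub]
    congr 2
    push_cast
    module

theorem lie_e_pow_succ_toEnd_f (t : IsSl2Triple h e f) (x : M) (n : ℕ) :
    ⁅e, (toEnd R L M f ^ (n + 1)) x⁆ = (toEnd R L M f ^ (n + 1)) ⁅e, x⁆ +
      (n + 1 : R) • (toEnd R L M f ^ n) (⁅h, x⁆ - (n : R) • x) := by
  induction n with
  | zero => simp [leibniz_lie e f, t.lie_e_f, add_comm]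
  | succ n ih =>
    rw [pow_succ', End.mul_apply, toEnd_apply_apply, leibniz_lie, ih, t.lie_e_f,
      lie_h_pow_toEnd_f R t]
    simp only [pow_succ' _ n, End.mul_apply, toEnd_apply_apply, map_sub, map_smul, lie_sub,
      lie_smul, Nat.cast_succ, lie_add]
    module

variable {R} in
theorem pow_succ_toEnd_e_pow_toEnd_f_eq_zero {t : IsSl2Triple h e f} {x : M} {μ : R}
    (P : t.HasPrimitiveVectorWith x μ) (n : ℕ) :
    (toEnd R L M e ^ (n + 1)) ((toEnd R L M f ^ n) x) = 0 := by
  induction n with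
  | zero => simpa using P.lie_e
  | succ n ih =>
    rw [pow_succ, End.mul_apply, toEnd_apply_apply, P.lie_e_pow_succ_toEnd_f, map_smul, ih,
      smul_zero]

end Commutators

variable [Field K] [CharZero K] [LieAlgebra K L] [Module K M] [LieModule K L M]

variable (K M) in
theorem isNilpotent_toEnd_e [FiniteDimensional K M] (t : IsSl2Triple h e f) :
    IsNilpotent (toEnd K L M e) := by
  refine isNilpotent_of_commutator_eq_smul (a := toEnd K L M h) (two_ne_zero (α := K)) ?_
  ext x
  simp [lie_h_lie_e K t]

/- On vectors of weight `m + 2` killed by `e ^ N`, the operator `e f` has the eigenvalues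
`(k + 1) * (m + 2 + k)` with `0 ≤ k < N`; none of them vanishes, so `e f` is invertible there. -/
theorem exists_lie_e_eq_of_pow_toEnd_e_eq_zero (t : IsSl2Triple h e f) {m : ℤ} (hm : -1 ≤ m)
    {N : ℕ} {z : M} (hz : ⁅h, z⁆ = (m + 2 : K) • z) (hNz : (toEnd K L M e ^ N) z = 0) :
    ∃ x : M, ⁅h, x⁆ = (m : K) • x ∧ ⁅e, x⁆ = z := by
  induction N generalizing z with
  | zero => exact ⟨0, by simp, by simpa using hNz.symm⟩
  | succ N ih =>
    set c : K := (N + 1) * (m + 2 + N)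
    have hc : c ≠ 0 := mul_ne_zero (Nat.cast_add_one_ne_zero N) (by norm_cast; lia)
    have weight_fz : ⁅h, ⁅f, z⁆⁆ = (m : K) • ⁅f, z⁆ := by
      rw [lie_h_lie_f K t, hz, ← sub_smul, add_sub_cancel_right, lie_smul]
    have weight_efz : ⁅h, ⁅e, ⁅f, z⁆⁆⁆ = (m + 2 : K) • ⁅e, ⁅f, z⁆⁆ := by
      rw [lie_h_lie_e K t, weight_fz, ← add_smul, lie_smul]
    have pow_efz : (toEnd K L M e ^ N) ⁅e, ⁅f, z⁆⁆ = c • (toEnd K L M e ^ N) z := by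
      have comm := lie_e_pow_succ_toEnd_f K t.symm z N
      rw [hNz, lie_zero, neg_lie, hz, pow_succ, End.mul_apply, toEnd_apply_apply, ← neg_smul,
        ← sub_smul, map_smul, smul_smul] at comm
      rw [eq_neg_of_add_eq_zero_left comm.symm]
      module
    obtain ⟨u, hu, heu⟩ := ih (z := ⁅e, ⁅f, z⁆⁆ - c • z)
      (by rw [lie_sub, weight_efz, lie_smul, hz]; module)
      (by rw [map_sub, map_smul, pow_efz, sub_self])
    refine ⟨c⁻¹ • (⁅f, z⁆ - u), ?_, ?_⟩
    · rw [lie_smul, lie_sub, weight_fz, hu]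
      module
    · rw [lie_smul, lie_sub, heu, sub_sub_cancel, inv_smul_smul₀ hc]

/- If `f ^ m` kills `x` of weight `m`, then `f ^ (m + 2)` kills `e x` of weight `m + 2`; going up
like this one reaches a primitive vector `v` of some weight `n`, for which `f ^ n v ≠ 0`. -/
theorem eq_zero_of_pow_toEnd_f_eq_zero (t : IsSl2Triple h e f) {m N : ℕ} {x : M}
    (hx : ⁅h, x⁆ = (m : K) • x) (hfx : (toEnd K L M f ^ m) x = 0)
    (hNx : (toEnd K L M e ^ N) x = 0) : x = 0 := by
  induction N generalizing m x with
  | zero => simpa using hNx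
  | succ N ih =>
    have weight_ex : ⁅h, ⁅e, x⁆⁆ = ((m + 2 : ℕ) : K) • ⁅e, x⁆ := by
      rw [lie_h_lie_e K t, hx, ← add_smul, lie_smul, Nat.cast_add, Nat.cast_two]
    have pow_ex : (toEnd K L M f ^ (m + 2)) ⁅e, x⁆ = 0 := by
      have pow_x : (toEnd K L M f ^ (m + 1)) x = 0 := by
        rw [pow_succ', End.mul_apply, hfx, map_zero]
      have pow_x' : (toEnd K L M f ^ (m + 2)) x = 0 := by
        rw [pow_succ', End.mul_apply, pow_x, map_zero]
      have comm := lie_e_pow_succ_toEnd_f K t x (m + 1)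
      rw [pow_x', lie_zero, hx, ← sub_smul, map_smul, pow_x, smul_zero, smul_zero,
        add_zero] at comm
      exact comm.symm
    by_contra hx0
    have P : t.HasPrimitiveVectorWith x (m : K) := ⟨hx0, hx, ih weight_ex pow_ex hNx⟩
    exact P.pow_toEnd_f_ne_zero_of_eq_nat rfl le_rfl hfx

section FiniteDimensional

variable [FiniteDimensional K M]

theorem map_toEnd_e_eigenspace (t : IsSl2Triple h e f) {m : ℤ} (hm : -1 ≤ m) :
    ((toEnd K L M h).eigenspace (m : K)).map (toEnd K L M e) =
      (toEnd K L M h).eigenspace (m + 2 : K) := by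
  obtain ⟨N, hN⟩ := isNilpotent_toEnd_e K M t
  ext z
  simp only [Submodule.mem_map, End.mem_eigenspace_iff, toEnd_apply_apply]
  constructor
  · rintro ⟨x, hx, rfl⟩
    rw [lie_h_lie_e K t, hx, ← add_smul, lie_smul]
  · intro hz
    exact exists_lie_e_eq_of_pow_toEnd_e_eq_zero t hm hz (by rw [hN, LinearMap.zero_apply])

theorem finrank_ker_inf_eigenspace_add (t : IsSl2Triple h e f) {m : ℤ} (hm : -1 ≤ m) :
    finrank K ↥(LinearMap.ker (toEnd K L M e) ⊓ (toEnd K L M h).eigenspace (m : K)) +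
      finrank K ((toEnd K L M h).eigenspace ((m + 2 : ℤ) : K)) =
    finrank K ((toEnd K L M h).eigenspace (m : K)) := by
  rw [Int.cast_add, Int.cast_two, ← map_toEnd_e_eigenspace t hm, finrank_inf_ker_add_finrank_map]

/- The vector `f ^ (m + 1) x` has weight `-(m + 2)` because `f ^ (m + 1) y = 0`, and it is killed by
`e ^ (m + 2)`, which is injective on that weight. -/
theorem eq_zero_of_lie_h_eq_smul_add_of_lie_e_eq_zero (t : IsSl2Triple h e f) {m : ℕ} {x y : M}
    (hx : ⁅h, x⁆ = (m : K) • x + y) (hy : ⁅h, y⁆ = (m : K) • y) (hex : ⁅e, x⁆ = 0) : y = 0 := by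
  by_contra hy0
  have hey : ⁅e, y⁆ = 0 := by
    simpa [hx, hex] using (lie_h_lie_e K t x).symm
  have P : t.HasPrimitiveVectorWith y (m : K) := ⟨hy0, hy, hey⟩
  set v := (toEnd K L M f ^ (m + 1)) x with hv
  have weight_v : ⁅-h, v⁆ = ((m + 2 : ℕ) : K) • v := by
    rw [hv, neg_lie, lie_h_pow_toEnd_f K t, hx, add_sub_right_comm, map_add,
      P.pow_toEnd_f_eq_zero_of_eq_nat rfl, ← sub_smul, map_smul]
    push_cast
    module
  have lie_e_v : ⁅e, v⁆ = (m + 1 : K) • (toEnd K L M f ^ m) y := by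
    rw [hv, lie_e_pow_succ_toEnd_f K t, hex, map_zero, zero_add, hx, add_sub_cancel_left]
  have pow_e_v : (toEnd K L M e ^ (m + 2)) v = 0 := by
    rw [pow_succ, End.mul_apply, toEnd_apply_apply, lie_e_v, map_smul,
      pow_succ_toEnd_e_pow_toEnd_f_eq_zero P, smul_zero]
  obtain ⟨N, hN⟩ := isNilpotent_toEnd_e K M t.symm
  have v_eq_zero : v = 0 :=
    eq_zero_of_pow_toEnd_f_eq_zero t.symm weight_v pow_e_v (by rw [hN, LinearMap.zero_apply])
  rw [v_eq_zero, lie_zero, eq_comm, smul_eq_zero_iff_right (Nat.cast_add_one_ne_zero m)] at lie_e_v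
  exact P.pow_toEnd_f_ne_zero_of_eq_nat rfl le_rfl lie_e_v

theorem eq_zero_of_lie_h_eq_smul_add_of_pow_toEnd_e_eq_zero (t : IsSl2Triple h e f) {m N : ℕ}
    {x y : M} (hx : ⁅h, x⁆ = (m : K) • x + y) (hy : ⁅h, y⁆ = (m : K) • y)
    (hNx : (toEnd K L M e ^ N) x = 0) : y = 0 := by
  induction N generalizing m x y with
  | zero =>
    obtain rfl : x = 0 := by simpa using hNx
    simpa using hx.symm
  | succ N ih =>
    have weight_ey : ⁅h, ⁅e, y⁆⁆ = ((m + 2 : ℕ) : K) • ⁅e, y⁆ := by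
      rw [lie_h_lie_e K t, hy, ← add_smul, lie_smul, Nat.cast_add, Nat.cast_two]
    have lie_h_ex : ⁅h, ⁅e, x⁆⁆ = ((m + 2 : ℕ) : K) • ⁅e, x⁆ + ⁅e, y⁆ := by
      rw [lie_h_lie_e K t, hx, add_right_comm, ← add_smul, lie_add, lie_smul, Nat.cast_add,
        Nat.cast_two]
    have hey : ⁅e, y⁆ = 0 := ih lie_h_ex weight_ey hNx
    obtain ⟨u, hu, heu⟩ : ∃ u : M, ⁅h, u⁆ = ((m : ℤ) : K) • u ∧ ⁅e, u⁆ = ⁅e, x⁆ :=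
      exists_lie_e_eq_of_pow_toEnd_e_eq_zero t (by lia) (by simpa [hey] using lie_h_ex) hNx
    refine eq_zero_of_lie_h_eq_smul_add_of_lie_e_eq_zero t (x := x - u) ?_ hy
      (by rw [lie_sub, heu, sub_self])
    rw [lie_sub, hx, hu, Int.cast_natCast]
    module

theorem eq_zero_of_lie_h_eq_smul_add (t : IsSl2Triple h e f) {m : ℤ} {x y : M}
    (hx : ⁅h, x⁆ = (m : K) • x + y) (hy : ⁅h, y⁆ = (m : K) • y) : y = 0 := by
  obtain ⟨n, rfl | rfl⟩ := m.eq_nat_or_neg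
  · obtain ⟨N, hN⟩ := isNilpotent_toEnd_e K M t
    exact eq_zero_of_lie_h_eq_smul_add_of_pow_toEnd_e_eq_zero t (m := n) (by simpa using hx)
      (by simpa using hy) (by rw [hN, LinearMap.zero_apply])
  · obtain ⟨N, hN⟩ := isNilpotent_toEnd_e K M t.symm
    refine neg_eq_zero.1 <| eq_zero_of_lie_h_eq_smul_add_of_pow_toEnd_e_eq_zero t.symm (m := n)
      (x := x) (y := -y) ?_ ?_ (by rw [hN, LinearMap.zero_apply])
    · simp [hx, add_comm]
    · simp [hy]

theorem disjoint_eigenspace_range (t : IsSl2Triple h e f) (m : ℤ) :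
    Disjoint ((toEnd K L M h).eigenspace (m : K))
      (LinearMap.range (toEnd K L M h - (m : K) • 1)) := by
  rw [Submodule.disjoint_def]
  rintro _ hy ⟨x, rfl⟩
  exact eq_zero_of_lie_h_eq_smul_add t (x := x) (by simp) (End.mem_eigenspace_iff.1 hy)

variable {Φ : LinearMap.BilinForm K M}

theorem eq_zero_of_forall_mem_eigenspace_neg (t : IsSl2Triple h e f) (hΦ : Φ.Nondegenerate)
    (hrefl : Φ.IsRefl) (hinv : Φ.lieInvariant L) {m : ℤ} {y : M}
    (hy : y ∈ (toEnd K L M h).eigenspace (m : K))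
    (hxy : ∀ x ∈ (toEnd K L M h).eigenspace (-m : K), Φ x y = 0) : y = 0 := by
  let S : End K M := toEnd K L M h - (-m : K) • 1
  let T : End K M := toEnd K L M h - (m : K) • 1
  have adjoint : Φ.IsAdjointPair Φ S (-T) := by
    intro x y
    simp only [S, T, Pi.neg_apply, LinearMap.sub_apply, LinearMap.smul_apply, End.one_apply,
      toEnd_apply_apply, map_sub, map_neg, map_smul, hinv h x y, smul_eq_mul]
    ring
  have hrange : y ∈ LinearMap.range T := by
    rw [← LinearMap.range_neg, ← orthogonal_ker_eq_range_of_isAdjointPair hΦ hrefl adjoint]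
    intro x hx
    exact hxy x (by rwa [End.eigenspace_def])
  exact Submodule.disjoint_def.1 (disjoint_eigenspace_range t m) y hy hrange

theorem even_finrank_eigenspace_natCast_of_odd (t : IsSl2Triple h e f) (hΦ : Φ.Nondegenerate)
    (hsymm : Φ.IsSymm) (hinv : Φ.lieInvariant L) {m : ℕ} (hm : Odd m) :
    Even (finrank K ((toEnd K L M h).eigenspace (m : K))) := by
  let W := (toEnd K L M h).eigenspace (m : K)
  let B : LinearMap.BilinForm K W := Φ.compl₁₂ W.subtype ((toEnd K L M f ^ m) ∘ₗ W.subtype)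
  have B_apply (x y : W) : B x y = Φ x ((toEnd K L M f ^ m) y) := rfl
  have skew (x y : W) : B x y = -B y x := by
    rw [B_apply, B_apply, ← hsymm.eq, lieInvariant_pow_toEnd hinv,
      hm.neg_one_pow, neg_one_mul]
  have separatingRight : B.SeparatingRight := by
    intro y hy
    have weight_y : ⁅h, (y : M)⁆ = (m : K) • (y : M) := End.mem_eigenspace_iff.1 y.2
    have weight_pow_y : ⁅h, (toEnd K L M f ^ m) (y : M)⁆ =
        ((-m : ℤ) : K) • (toEnd K L M f ^ m) (y : M) := by
      rw [lie_h_pow_toEnd_f K t, weight_y, ← sub_smul, map_smul]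
      push_cast
      module
    have pow_y : (toEnd K L M f ^ m) (y : M) = 0 :=
      eq_zero_of_forall_mem_eigenspace_neg t hΦ hsymm.isRefl hinv
        (End.mem_eigenspace_iff.2 weight_pow_y) fun x hx ↦ hy ⟨x, by simpa [W] using hx⟩
    obtain ⟨N, hN⟩ := isNilpotent_toEnd_e K M t
    exact Subtype.ext <|
      eq_zero_of_pow_toEnd_f_eq_zero t weight_y pow_y (by rw [hN, LinearMap.zero_apply])
  have separatingLeft : B.SeparatingLeft := fun x hx ↦
    separatingRight x fun y ↦ by rw [skew, hx, neg_zero]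
  exact even_finrank_of_nondegenerate_of_skew two_ne_zero ⟨separatingLeft, separatingRight⟩ skew

theorem even_finrank_eigenspace_of_odd (t : IsSl2Triple h e f) (hΦ : Φ.Nondegenerate)
    (hsymm : Φ.IsSymm) (hinv : Φ.lieInvariant L) {m : ℤ} (hm : Odd m) :
    Even (finrank K ((toEnd K L M h).eigenspace (m : K))) := by
  obtain ⟨n, rfl | rfl⟩ := m.eq_nat_or_neg
  · rw [Int.cast_natCast]
    exact even_finrank_eigenspace_natCast_of_odd t hΦ hsymm hinv ((Int.odd_coe_nat n).1 hm)
  · rw [← eigenspace_smul_mul _ _ (neg_ne_zero.2 (one_ne_zero' K)), neg_one_smul, ← map_neg,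
      Int.cast_neg, neg_mul_neg, one_mul, Int.cast_natCast]
    exact even_finrank_eigenspace_natCast_of_odd t.symm hΦ hsymm hinv
      ((Int.odd_coe_nat n).1 (odd_neg.1 hm))

end FiniteDimensional

end Sl2Rep

theorem stmt_4_general {K L M : Type*} [Field K] [CharZero K] [LieRing L] [LieAlgebra K L]
    [AddCommGroup M] [Module K M] [LieRingModule L M] [LieModule K L M] [FiniteDimensional K M]
    {Φ : LinearMap.BilinForm K M} (hΦ : Φ.Nondegenerate) (hsymm : Φ.IsSymm)
    (hinv : Φ.lieInvariant L) {h e f e' f' : L} (t : IsSl2Triple h e f)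
    (t' : IsSl2Triple ((2⁻¹ : K) • h) e' f') {j : ℤ} (hj : 1 ≤ j) :
    Even (finrank K ↥(LinearMap.ker (toEnd K L M e) ⊓
        (toEnd K L M h).eigenspace ((4 * j - 2 : ℤ) : K)) +
      finrank K ↥(LinearMap.ker (toEnd K L M e) ⊓
        (toEnd K L M h).eigenspace ((4 * j : ℤ) : K))) := by
  have even_finrank {n : ℤ} (hn : Odd n) :
      Even (finrank K ((toEnd K L M h).eigenspace ((2 * n : ℤ) : K))) := by
    rw [Int.cast_mul, Int.cast_two, ← eigenspace_smul_mul _ _ (inv_ne_zero (two_ne_zero' K)),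
      inv_mul_cancel_left₀ two_ne_zero, ← map_smul]
    exact Sl2Rep.even_finrank_eigenspace_of_odd t' hΦ hsymm hinv hn
  have even_lo := even_finrank (n := 2 * j - 1) (by grind)
  have even_hi := even_finrank (n := 2 * j + 1) (by grind)
  have step_lo :=
    Sl2Rep.finrank_ker_inf_eigenspace_add (K := K) (M := M) t (m := 4 * j - 2) (by lia)
  have step_hi :=
    Sl2Rep.finrank_ker_inf_eigenspace_add (K := K) (M := M) t (m := 4 * j) (by lia)
  rw [show 2 * (2 * j - 1) = 4 * j - 2 by ring] at even_lo
  rw [show 2 * (2 * j + 1) = 4 * j + 2 by ring] at even_hi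
  rw [show 4 * j - 2 + 2 = 4 * j by ring] at step_lo
  grind

/-- If `(h,e,f)` and `(h/2,e',f')` are both sl₂-triples in a finite-dimensional semisimple
Lie algebra over an algebraically closed char-0 field, then for every `j ≥ 1` the number
`dim(𝔤^e ∩ 𝔤(4j−2)) + dim(𝔤^e ∩ 𝔤(4j))` is even. -/
theorem stmt_4 {k : Type*} [Field k] [IsAlgClosed k] [CharZero k]
    {L : Type*} [LieRing L] [LieAlgebra k L] [FiniteDimensional k L]
    [LieAlgebra.IsSemisimple k L]
    {h e f e' f' : L} (ht : IsSl2Triple h e f)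
    (ht' : IsSl2Triple ((2⁻¹ : k) • h) e' f') :
    ∀ j : ℤ, 1 ≤ j →
      Even (Module.finrank k ((LinearMap.ker (ad k L e) ⊓
          (ad k L h).eigenspace (((4 * j - 2 : ℤ) : k)) : Submodule k L)) +
        Module.finrank k ((LinearMap.ker (ad k L e) ⊓
          (ad k L h).eigenspace (((4 * j : ℤ) : k)) : Submodule k L))) := fun _ hj ↦
  stmt_4_general (IsKilling.killingForm_nondegenerate k L)
    (LinearMap.BilinForm.isSymm_iff.2 (traceForm_isSymm k L L)) (traceForm_lieInvariant k L L)
    ht ht' hj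
end

section
/- Let 𝔤 be a finite-dimensional Lie algebra over a field of characteristic 0, let (h,e,f) be an sl₂-triple in 𝔤, and let x ∈ 𝔤 satisfy ⁅h,x⁆ = 4x. Then for every natural number m ≥ 1, if (ad e)^{2m} = 0 then (ad x)^m = 0. (In other words, the height of any element of the eigenspace 𝔤(4) is at most half the height of e.) -/
open LieAlgebra Module

/-!
Let `sl₂` act on a module `M`. Applying `e` to a vector of weight `μ` until just before it vanishes
gives a primitive vector `u` of some weight `μ + 2r`, and `eⁿfⁿu` is the multiple of `u` by
`∏ i < n, (i + 1) (μ + 2r - i)`. So if `eⁿ = 0` on `M`, then `μ + 2r` is one of `0, …, n - 1`.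
Now let `eⁿ = 0` on `M` and `⁅h, x⁆ = c • x`. Then `xᵐ` is a vector of weight `m * c` in `End M`,
where `e` acts as the difference of left and right multiplication by `e`, so that `e ^ (2n - 1)`
acts as zero. Hence `xᵐ = 0` unless `m * c` is an integer less than `2n - 1`.
-/

open LieModule

section PrimitiveVector

variable {R L M : Type*} [CommRing R] [LieRing L] [LieAlgebra R L]
  [AddCommGroup M] [Module R M] [LieRingModule L M] [LieModule R L M]
  {h e f : L} {t : IsSl2Triple h e f} {u : M} {μ : R}

lemma pow_toEnd_e_pow_toEnd_f_apply (hu : t.HasPrimitiveVectorWith u μ) (n : ℕ) :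
    (toEnd R L M e ^ n) ((toEnd R L M f ^ n) u) =
      (∏ i ∈ Finset.range n, ((i + 1) * (μ - i))) • u := by
  induction n with
  | zero => simp
  | succ n ih =>
    rw [pow_succ (toEnd R L M e), Module.End.mul_apply, toEnd_apply_apply,
      hu.lie_e_pow_succ_toEnd_f, map_smul, ih, smul_smul, Finset.prod_range_succ_comm]

variable [IsDomain R] [CharZero R] [IsTorsionFree R M]

lemma exists_nat_lt_weight_eq_of_pow_toEnd_e_eq_zero (hu : t.HasPrimitiveVectorWith u μ) {n : ℕ}
    (he : toEnd R L M e ^ n = 0) : ∃ i < n, μ = i := by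
  have hprod := pow_toEnd_e_pow_toEnd_f_apply hu n
  rw [he, LinearMap.zero_apply, eq_comm, smul_eq_zero_iff_left hu.ne_zero,
    Finset.prod_eq_zero_iff] at hprod
  obtain ⟨i, hi, hμ⟩ := hprod
  have hi_succ : (i + 1 : R) ≠ 0 := Nat.cast_add_one_ne_zero i
  exact ⟨i, Finset.mem_range.mp hi, sub_eq_zero.mp ((mul_eq_zero.mp hμ).resolve_left hi_succ)⟩

lemma exists_weight_add_two_mul_eq_of_pow_toEnd_e_eq_zero (t : IsSl2Triple h e f) {v : M}
    (hv : v ≠ 0) (hμ : ⁅h, v⁆ = μ • v) {n : ℕ} (he : toEnd R L M e ^ n = 0) :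
    ∃ r : ℕ, ∃ i < n, μ + 2 * r = i := by
  obtain ⟨r, hr, hr_succ⟩ := Nat.exists_not_and_succ_of_not_zero_of_exists
    (p := fun r ↦ (toEnd R L M e ^ r) v = 0) hv ⟨n, by simp [he]⟩
  have hprim : t.HasPrimitiveVectorWith ((toEnd R L M e ^ r) v) (μ + 2 * r) :=
    { ne_zero := hr
      lie_h := t.lie_h_pow_toEnd_e hμ r
      lie_e := by rwa [IsSl2Triple.lie_e_pow_toEnd_e] }
  exact ⟨r, exists_nat_lt_weight_eq_of_pow_toEnd_e_eq_zero hprim he⟩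

end PrimitiveVector

lemma mulLeft_sub_mulRight_pow_eq_zero (R : Type*) {A : Type*} [CommRing R] [Ring A]
    [Algebra R A] {a : A} {n : ℕ} (ha : a ^ n = 0) :
    (LinearMap.mulLeft R a - LinearMap.mulRight R a) ^ (2 * n - 1) = 0 := by
  have hcomm : Commute (LinearMap.mulLeft R a : End R A) (LinearMap.mulRight R (-a)) :=
    LinearMap.commute_mulLeft_right a (-a)
  have hleft : LinearMap.mulLeft R a ^ n = 0 := by simp [LinearMap.pow_mulLeft, ha]
  have hright : LinearMap.mulRight R (-a) ^ n = 0 := by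
    simp [LinearMap.pow_mulRight, neg_pow a, ha]
  have hsub : LinearMap.mulLeft R a - LinearMap.mulRight R a =
      LinearMap.mulLeft R a + LinearMap.mulRight R (-a) := by
    ext b
    simp [sub_eq_add_neg]
  rw [hsub]
  exact hcomm.add_pow_eq_zero_of_add_le_succ_of_pow_eq_zero hleft hright (by lia)

section EndRepresentation

variable {R L M : Type*} [CommRing R] [LieRing L] [LieAlgebra R L]
  [AddCommGroup M] [Module R M] [LieRingModule L M] [LieModule R L M]

variable (R L M) in
lemma toEnd_end_eq_mulLeft_sub_mulRight (x : L) :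
    toEnd R L (End R M) x =
      LinearMap.mulLeft R (toEnd R L M x) - LinearMap.mulRight R (toEnd R L M x) :=
  rfl

lemma lie_toEnd (x y : L) : ⁅x, toEnd R L M y⁆ = toEnd R L M ⁅x, y⁆ := by
  ext v
  simp

lemma lie_end_mul (x : L) (a b : End R M) : ⁅x, a * b⁆ = ⁅x, a⁆ * b + a * ⁅x, b⁆ := by
  ext v
  simp

lemma lie_end_pow_eq_smul {x : L} {c : R} {a : End R M} (ha : ⁅x, a⁆ = c • a) (n : ℕ) :
    ⁅x, a ^ n⁆ = (n * c) • a ^ n := by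
  induction n with
  | zero => ext v; simp
  | succ n ih =>
    rw [pow_succ, lie_end_mul, ih, ha, smul_mul_assoc, mul_smul_comm, ← add_smul,
      Nat.cast_succ, add_one_mul]

end EndRepresentation

theorem stmt_6_general {R L M : Type*} [CommRing R] [IsDomain R] [CharZero R]
    [LieRing L] [LieAlgebra R L] [AddCommGroup M] [Module R M] [IsTorsionFree R M]
    [LieRingModule L M] [LieModule R L M] {h e f : L} (ht : IsSl2Triple h e f)
    {x : L} {c : R} (hx : ⁅h, x⁆ = c • x) {m n : ℕ} (he : toEnd R L M e ^ n = 0)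
    (hmc : ∀ j : ℤ, j < 2 * n - 1 → m * c ≠ j) : toEnd R L M x ^ m = 0 := by
  by_contra hxm
  have hweight : ⁅h, toEnd R L M x ^ m⁆ = (m * c) • toEnd R L M x ^ m :=
    lie_end_pow_eq_smul (by rw [lie_toEnd, hx, map_smul]) m
  have he_end : toEnd R L (End R M) e ^ (2 * n - 1) = 0 := by
    rw [toEnd_end_eq_mulLeft_sub_mulRight]
    exact mulLeft_sub_mulRight_pow_eq_zero R he
  obtain ⟨r, i, hi, hri⟩ :=
    exists_weight_add_two_mul_eq_of_pow_toEnd_e_eq_zero ht hxm hweight he_end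
  refine hmc (i - 2 * r) (by lia) ?_
  push_cast
  exact eq_sub_of_add_eq hri

/-- Let `(h,e,f)` be an sl₂-triple and `x` satisfy `⁅h,x⁆ = 4x`.  Then for all `m ≥ 1`,
if `(ad e)^(2m) = 0` then `(ad x)^m = 0`: the height of any element of `𝔤(4)` is at most
half the height of `e`. -/
theorem stmt_6 {k : Type*} [Field k] [CharZero k]
    {L : Type*} [LieRing L] [LieAlgebra k L] [FiniteDimensional k L]
    {h e f : L} (ht : IsSl2Triple h e f)
    {x : L} (hx : ⁅h, x⁆ = (4 : k) • x) :
    ∀ m : ℕ, 1 ≤ m → (ad k L e) ^ (2 * m) = 0 → (ad k L x) ^ m = 0 := by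
  intro m _ he
  exact stmt_6_general ht hx he fun j hj ↦ by norm_cast; lia
end
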